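/- Let h ∈ ℕ and let T be a rooted tree of height at most h. Then |t_h(T,α) − t_h(T,β)| ≤ |E(T)| · W^h(α,β) for all α,β ∈ M_h, and |t(T,μ) − t(T,ν)| ≤ |V(T)| · δW^h(μ,ν) for all Borel probability measures μ,ν on M_h. -/

import Mathlib

open MeasureTheory Set

noncomputable section

/-- Borel measures of total mass at most one on `X`. -/
abbrev SubProb (X : Type) [MeasurableSpace X] : Type :=
  {μ : Measure X // μ Set.univ ≤ 1}

/-- The weak topology on `SubProb X`: the coarsest topology making all maps
`μ ↦ ∫ f dμ` for bounded continuous `f` continuous. -/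
def subProbWeakTop (X : Type) [MeasurableSpace X] [TopologicalSpace X] :
    TopologicalSpace (SubProb X) :=
  ⨅ f : BoundedContinuousFunction X ℝ,
    TopologicalSpace.induced (fun μ => ∫ x, f x ∂μ.val) inferInstance

/-- Iterated degree measure spaces with their (weak) topologies:
`M 0` is a one-point space and `M (h+1)` is the space of Borel measures of total
mass at most one on `M h` with the weak topology. -/
def IDM : ℕ → Σ X : Type, TopologicalSpace X
  | 0 => ⟨Unit, inferInstance⟩
  | (h+1) =>
      let p := IDM h
      ⟨@SubProb p.1 (@borel p.1 p.2), @subProbWeakTop p.1 (@borel p.1 p.2) p.2⟩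

/-- The space of iterated degree measures of depth `h`. -/
def M (h : ℕ) : Type := (IDM h).1

instance (h : ℕ) : TopologicalSpace (M h) := (IDM h).2
instance (h : ℕ) : MeasurableSpace (M h) := borel (M h)
instance (h : ℕ) : BorelSpace (M h) := ⟨rfl⟩

def toSub {h : ℕ} (α : M (h+1)) : SubProb (M h) := α
def ofSub {h : ℕ} (μ : SubProb (M h)) : M (h+1) := μ
/-- The underlying measure of an iterated degree measure. -/
def toMeas {h : ℕ} (α : M (h+1)) : Measure (M h) := (toSub α).1

def uwAux {X : Type _} [MeasurableSpace X] (d : X → X → ℝ) (μ ν : Measure X) : ℝ :=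
  (μ Set.univ).toReal - (ν Set.univ).toReal +
    sInf {r : ℝ | ∃ γ : Measure (X × X), γ Set.univ ≤ 1 ∧
      γ.map Prod.fst ≤ μ ∧ γ.map Prod.snd = ν ∧ r = ∫ p, d p.1 p.2 ∂γ}

open Classical in
/-- The unbalanced Wasserstein distance w.r.t. a distance function `d`:
`‖μ‖ - ‖ν‖` plus the optimal transport cost over sub-couplings, where w.l.o.g.
`‖μ‖ ≥ ‖ν‖`. -/
def uwDist {X : Type _} [MeasurableSpace X] (d : X → X → ℝ) (μ ν : Measure X) : ℝ :=
  if ν Set.univ ≤ μ Set.univ then uwAux d μ ν else uwAux d ν μ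

/-- The classical Wasserstein distance (over couplings) w.r.t. a cost `d`. -/
def wassersteinDist {X : Type _} [MeasurableSpace X] (d : X → X → ℝ)
    (μ ν : Measure X) : ℝ :=
  sInf {r : ℝ | ∃ γ : Measure (X × X),
    γ.map Prod.fst = μ ∧ γ.map Prod.snd = ν ∧ r = ∫ p, d p.1 p.2 ∂γ}

/-- The iterated unbalanced Wasserstein metrics `W^h` on the spaces `M h`. -/
def Wdist : (h : ℕ) → M h → M h → ℝ
  | 0, _, _ => 0
  | (h+1), α, β => uwDist (Wdist h) (toMeas α) (toMeas β)

/-- Borel probability measures on `X`. -/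
abbrev ProbM (X : Type) [MeasurableSpace X] : Type :=
  {μ : Measure X // IsProbabilityMeasure μ}

/-- The weak topology on Borel probability measures. -/
def probWeakTop (X : Type) [MeasurableSpace X] [TopologicalSpace X] :
    TopologicalSpace (ProbM X) :=
  ⨅ f : BoundedContinuousFunction X ℝ,
    TopologicalSpace.induced (fun μ => ∫ x, f x ∂μ.val) inferInstance

/-- Rooted trees of height at most `h`: a tree of height at most `h+1` is a root
together with a list of subtrees of height at most `h`. -/
def TreeH : ℕ → Type
  | 0 => Unit
  | (h+1) => List (TreeH h)

/-- The number of vertices of a rooted tree. -/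
def nV : (h : ℕ) → TreeH h → ℕ
  | 0, _ => 1
  | (h+1), cs => 1 + (cs.map (nV h)).sum

/-- The number of edges of a rooted tree. -/
def nE : (h : ℕ) → TreeH h → ℕ
  | 0, _ => 0
  | (h+1), cs => cs.length + (cs.map (nE h)).sum

/-- The homomorphism density function `t_h(T, ·) : M h → ℝ` of a rooted tree `T` of
height at most `h`. -/
def homDen : (h : ℕ) → TreeH h → M h → ℝ
  | 0, _, _ => 1
  | (h+1), cs, α => (cs.map fun T => ∫ β, homDen h T β ∂(toMeas α)).prod

open Filter Topology


attribute [local instance] subProbWeakTop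

set_option linter.unusedSectionVars false
set_option linter.style.haveILetI false

section gen
variable {X : Type} [TopologicalSpace X] [MeasurableSpace X] [BorelSpace X]

instance subProbFin {X : Type} [MeasurableSpace X] (μ : SubProb X) : IsFiniteMeasure μ.1 :=
  ⟨lt_of_le_of_lt μ.2 (by simp)⟩

lemma sp_cont_integral (f : BoundedContinuousFunction X ℝ) :
    Continuous (fun μ : SubProb X => ∫ x, f x ∂μ.1) :=
  continuous_iff_le_induced.2 (iInf_le _ f)

lemma sp_cont_integral' [CompactSpace X] {f : X → ℝ} (hf : Continuous f) :
    Continuous (fun μ : SubProb X => ∫ x, f x ∂μ.1) :=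
  sp_cont_integral (BoundedContinuousFunction.mkOfCompact ⟨f, hf⟩)

lemma sp_cont_mass [CompactSpace X] :
    Continuous (fun μ : SubProb X => (μ.1 Set.univ).toReal) := by
  have := sp_cont_integral' (X := X) (f := fun _ => (1:ℝ)) continuous_const
  simpa [Measure.real] using this

lemma sp_compact [CompactSpace X] [T2Space X] : CompactSpace (SubProb X) := by
  have hK := isCompact_setOfPred_finiteMeasure_le_of_compactSpace X 1
  let F : FiniteMeasure X → SubProb X := fun μ =>
    if h : (μ : Measure X) univ ≤ 1 then ⟨μ, h⟩ else ⟨0, by simp⟩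
  have hF : ∀ μ : FiniteMeasure X, μ.mass ≤ 1 → (F μ).1 = μ := by
    intro μ h
    have : (μ : Measure X) univ ≤ 1 := by
      rw [← FiniteMeasure.ennreal_mass]; exact_mod_cast h
    simp [F, this]
  have hc : ContinuousOn F {μ : FiniteMeasure X | μ.mass ≤ 1} := by
    rw [continuousOn_iff_continuous_domRestrict]
    refine continuous_iInf_rng.2 fun f => continuous_induced_rng.2 ?_
    have : Continuous (fun μ : {μ : FiniteMeasure X | μ.mass ≤ 1} =>
        ∫ x, f x ∂(μ.1 : Measure X)) :=
      (FiniteMeasure.continuous_integral_boundedContinuousFunction f).comp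
        continuous_subtype_val
    refine this.congr fun μ => ?_
    simp only [Function.comp, Set.domRestrict_apply]
    rw [hF μ.1 μ.2]
  have := hK.image_of_continuousOn hc
  refine ⟨?_⟩
  convert this
  symm
  rw [eq_univ_iff_forall]
  intro μ
  refine ⟨⟨μ.1, inferInstance⟩, ?_, ?_⟩
  · have := μ.2
    change ENNReal.toNNReal _ ≤ 1
    exact ENNReal.toNNReal_mono (b := 1) (by simp) this
  · simp [F, μ.2]

lemma sp_ext [CompactSpace X] [T2Space X] [SecondCountableTopology X] {μ ν : Measure X}
    [IsFiniteMeasure μ] [IsFiniteMeasure ν]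
    (h : ∀ f : C(X, ℝ), ∫ x, f x ∂μ = ∫ x, f x ∂ν) : μ = ν := by
  letI := TopologicalSpace.metrizableSpaceMetric X
  exact ext_of_forall_integral_eq_of_IsFiniteMeasure fun f => h f.toContinuousMap

lemma sp_t2 [CompactSpace X] [T2Space X] [SecondCountableTopology X] : T2Space (SubProb X) := by
  have : Function.Injective (fun (μ : SubProb X) (f : C(X, ℝ)) => ∫ x, f x ∂μ.1) := by
    intro μ ν h
    exact Subtype.ext (sp_ext fun f => congrFun h f)
  exact T2Space.of_injective_continuous this
    (continuous_pi fun f => sp_cont_integral' f.continuous)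

lemma sp_sc [CompactSpace X] [T2Space X] [SecondCountableTopology X] :
    SecondCountableTopology (SubProb X) := by
  haveI := sp_compact (X := X)
  haveI := sp_t2 (X := X)
  let u := TopologicalSpace.denseSeq C(X, ℝ)
  have hcont : ∀ μ : SubProb X, Continuous (fun f : C(X, ℝ) => ∫ x, f x ∂μ.1) := by
    intro μ
    refine (LipschitzWith.of_dist_le_mul (K := 1) fun f g => ?_).continuous
    have hi : ∀ f : C(X, ℝ), Integrable f μ.1 := fun f =>
      (BoundedContinuousFunction.mkOfCompact f).integrable μ.1
    rw [Real.dist_eq, ← integral_sub (hi f) (hi g), ← Real.norm_eq_abs]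
    refine (norm_integral_le_of_norm_le_const (C := dist f g) (ae_of_all _ fun x => ?_)).trans ?_
    · rw [Real.norm_eq_abs, ← Real.dist_eq]; exact ContinuousMap.dist_apply_le_dist x
    · have h1 : μ.1.real univ ≤ 1 := ENNReal.toReal_mono (b := 1) (by simp) μ.2
      have h2 : 0 ≤ dist f g := dist_nonneg
      simp only [NNReal.coe_one, one_mul]
      nlinarith
  have hinj : Function.Injective (fun (μ : SubProb X) (n : ℕ) => ∫ x, u n x ∂μ.1) := by
    intro μ ν h
    refine Subtype.ext (sp_ext fun f => ?_)
    have : (fun f : C(X, ℝ) => ∫ x, f x ∂μ.1) = (fun f : C(X, ℝ) => ∫ x, f x ∂ν.1) := by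
      refine (TopologicalSpace.denseRange_denseSeq C(X, ℝ)).equalizer (hcont μ) (hcont ν) ?_
      ext n
      exact congrFun h n
    exact congrFun this f
  have hc : Continuous (fun (μ : SubProb X) (n : ℕ) => ∫ x, u n x ∂μ.1) :=
    continuous_pi fun n => sp_cont_integral' (u n).continuous
  exact (hc.isClosedEmbedding hinj).isEmbedding.secondCountableTopology

lemma lsc_approx [CompactSpace X] [T2Space X] [SecondCountableTopology X]
    {g : X → ℝ} (hg : LowerSemicontinuous g) (h0 : ∀ x, 0 ≤ g x) (h1 : ∀ x, g x ≤ 1) :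
    ∃ u : ℕ → X → ℝ, (∀ n, Continuous (u n)) ∧ (∀ n x, 0 ≤ u n x) ∧ (∀ n x, u n x ≤ g x) ∧
      ∀ x, Tendsto (fun n => u n x) atTop (𝓝 (g x)) := by
  letI := TopologicalSpace.metrizableSpaceMetric X
  have bdd : ∀ (n : ℕ) x, BddBelow (range fun y => g y + n * dist x y) := fun n x =>
    ⟨0, by rintro _ ⟨y, rfl⟩; have := h0 y; positivity⟩
  refine ⟨fun n x => ⨅ y, (g y + n * dist x y), fun n => ?_, fun n x => ?_, fun n x => ?_,
    fun x => ?_⟩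
  · refine (LipschitzWith.of_le_add_mul (n : NNReal) fun x y => ?_).continuous
    haveI : Nonempty X := ⟨x⟩
    rw [← sub_le_iff_le_add]
    refine le_ciInf fun z => ?_
    rw [sub_le_iff_le_add]
    refine (ciInf_le (bdd n x) z).trans ?_
    have := dist_triangle x y z
    have hn : (0:ℝ) ≤ n := Nat.cast_nonneg n
    have := mul_le_mul_of_nonneg_left this hn
    push_cast
    linarith
  · exact Real.iInf_nonneg fun y => by have := h0 y; positivity
  · refine (ciInf_le (bdd n x) x).trans (by simp)
  · haveI : Nonempty X := ⟨x⟩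
    rw [Metric.tendsto_atTop]
    intro ε hε
    have := hg x (g x - ε / 2) (by linarith)
    obtain ⟨δ, hδ, hb⟩ := Metric.eventually_nhds_iff.1 this
    obtain ⟨N, hN⟩ := exists_nat_gt (1 / δ)
    refine ⟨N, fun n hn => ?_⟩
    have hup : (⨅ y, (g y + n * dist x y)) ≤ g x := (ciInf_le (bdd n x) x).trans (by simp)
    have hlo : g x - ε / 2 ≤ ⨅ y, (g y + n * dist x y) := by
      refine le_ciInf fun y => ?_
      by_cases hy : dist y x < δ
      · have := hb hy
        have : 0 ≤ n * dist x y := by positivity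
        linarith
      · push Not at hy
        rw [dist_comm] at hy
        have : (1:ℝ) ≤ n * dist x y := by
          have h2 : 1 / δ ≤ n := hN.le.trans (by exact_mod_cast hn)
          rw [div_le_iff₀ hδ] at h2
          exact h2.trans (by gcongr)
        have := h0 y
        have := h1 x
        linarith
    rw [Real.dist_eq, abs_lt]
    constructor <;> linarith

lemma lsc_integral [CompactSpace X] [T2Space X] [SecondCountableTopology X]
    {g : X → ℝ} (hg : LowerSemicontinuous g) (h0 : ∀ x, 0 ≤ g x) (h1 : ∀ x, g x ≤ 1) :
    LowerSemicontinuous (fun γ : SubProb X => ∫ x, g x ∂γ.1) := by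
  obtain ⟨u, hu, hu0, hug, hlim⟩ := lsc_approx hg h0 h1
  rw [lowerSemicontinuous_iff_isClosed_preimage]
  intro c
  have : (fun γ : SubProb X => ∫ x, g x ∂γ.1) ⁻¹' Iic c =
      ⋂ n, (fun γ : SubProb X => ∫ x, u n x ∂γ.1) ⁻¹' Iic c := by
    ext γ
    simp only [mem_preimage, mem_Iic, mem_iInter]
    have hi : ∀ n, Integrable (u n) γ.1 := fun n =>
      Integrable.of_bound (hu n).aestronglyMeasurable 1
        (ae_of_all _ fun x => by
          rw [Real.norm_of_nonneg (hu0 n x)]; exact (hug n x).trans (h1 x))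
    constructor
    · intro h n
      refine le_trans (integral_mono (hi n) ?_ (hug n)) h
      exact Integrable.of_bound hg.measurable.aestronglyMeasurable 1
        (ae_of_all _ fun x => by rw [Real.norm_of_nonneg (h0 x)]; exact h1 x)
    · intro h
      refine le_of_tendsto' (tendsto_integral_of_dominated_convergence (fun _ => (1:ℝ))
        (fun n => (hu n).aestronglyMeasurable) (integrable_const _)
        (fun n => ae_of_all _ fun x => by
          rw [Real.norm_of_nonneg (hu0 n x)]; exact (hug n x).trans (h1 x))
        (ae_of_all _ hlim)) h
  rw [this]
  exact isClosed_iInter fun n => isClosed_Iic.preimage (sp_cont_integral' (hu n))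

end gen

section uw

lemma uw_coupling {X : Type} [MeasurableSpace X] (μ ν : SubProb X)
    (h : ν.1 univ ≤ μ.1 univ) : ∃ γ : Measure (X × X), γ univ ≤ 1 ∧
      γ.map Prod.fst ≤ μ.1 ∧ γ.map Prod.snd = ν.1 := by
  by_cases hμ : μ.1 univ = 0
  · have hν : ν.1 univ = 0 := le_antisymm (hμ ▸ h) (zero_le)
    refine ⟨0, by simp, by rw [Measure.map_zero]; exact Measure.zero_le _, ?_⟩
    rw [Measure.measure_univ_eq_zero.1 hν]; simp
  · have ht : μ.1 univ ≠ ⊤ := measure_ne_top _ _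
    have hc : (μ.1 univ)⁻¹ * ν.1 univ ≤ 1 := by
      refine le_trans ?_ (ENNReal.inv_mul_cancel hμ ht).le; gcongr
    have hs : ((μ.1 univ)⁻¹ • μ.1.prod ν.1).map Prod.snd = ν.1 := by
      rw [Measure.map_smul, Measure.map_snd_prod, smul_smul, ENNReal.inv_mul_cancel hμ ht, one_smul]
    refine ⟨(μ.1 univ)⁻¹ • μ.1.prod ν.1, ?_, ?_, hs⟩
    · have : ((μ.1 univ)⁻¹ • μ.1.prod ν.1) univ = ν.1 univ := by
        conv_rhs => rw [← hs, Measure.map_apply measurable_snd MeasurableSet.univ]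
        simp
      rw [this]; exact ν.2
    · rw [Measure.map_smul, Measure.map_fst_prod, smul_smul]
      intro s
      simp only [Measure.smul_apply, smul_eq_mul]
      exact mul_le_of_le_one_left (zero_le) hc

variable {X : Type} [MeasurableSpace X] {d : X → X → ℝ}

lemma uw_bddBelow (h0 : ∀ x y, 0 ≤ d x y) (μ ν : Measure X) :
    BddBelow {r : ℝ | ∃ γ : Measure (X × X), γ Set.univ ≤ 1 ∧
      γ.map Prod.fst ≤ μ ∧ γ.map Prod.snd = ν ∧ r = ∫ p, d p.1 p.2 ∂γ} :=
  ⟨0, by rintro _ ⟨γ, -, -, -, rfl⟩; exact integral_nonneg fun p => h0 _ _⟩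

lemma uwAux_nonneg (h0 : ∀ x y, 0 ≤ d x y) (μ ν : SubProb X) (h : ν.1 univ ≤ μ.1 univ) :
    0 ≤ uwAux d μ.1 ν.1 := by
  have h1 : (ν.1 univ).toReal ≤ (μ.1 univ).toReal := ENNReal.toReal_mono (measure_ne_top _ _) h
  have h2 : 0 ≤ sInf {r : ℝ | ∃ γ : Measure (X × X), γ Set.univ ≤ 1 ∧
      γ.map Prod.fst ≤ μ.1 ∧ γ.map Prod.snd = ν.1 ∧ r = ∫ p, d p.1 p.2 ∂γ} := by
    apply Real.sInf_nonneg
    rintro _ ⟨γ, -, -, -, rfl⟩; exact integral_nonneg fun p => h0 _ _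
  unfold uwAux
  linarith

lemma uwAux_le_one (h0 : ∀ x y, 0 ≤ d x y) (h1 : ∀ x y, d x y ≤ 1) (μ ν : SubProb X)
    (h : ν.1 univ ≤ μ.1 univ) : uwAux d μ.1 ν.1 ≤ 1 := by
  obtain ⟨γ, hγ, hf, hs⟩ := uw_coupling μ ν h
  have h3 := csInf_le (uw_bddBelow h0 μ.1 ν.1) ⟨γ, hγ, hf, hs, rfl⟩
  have h4 : γ univ = ν.1 univ := by
    rw [← hs, Measure.map_apply measurable_snd MeasurableSet.univ]; simp
  haveI : IsFiniteMeasure γ := ⟨lt_of_le_of_lt hγ (by simp)⟩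
  have h5 : ‖∫ p, d p.1 p.2 ∂γ‖ ≤ 1 * γ.real univ :=
    norm_integral_le_of_norm_le_const (ae_of_all _ fun p => by
      rw [Real.norm_of_nonneg (h0 _ _)]; exact h1 _ _)
  have h6 := (le_abs_self _).trans h5
  rw [one_mul, Measure.real, h4] at h6
  have h7 : (μ.1 univ).toReal ≤ 1 := ENNReal.toReal_mono (b := 1) (by simp) μ.2
  unfold uwAux
  linarith

lemma uw_eq_of_le {X : Type} [MeasurableSpace X] {μ ν : Measure X} [IsFiniteMeasure ν] (h : μ ≤ ν)
    (hu : μ univ = ν univ) : μ = ν := by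
  haveI : IsFiniteMeasure μ := ⟨by rw [hu]; exact measure_lt_top _ _⟩
  refine Measure.ext fun s hs => le_antisymm (h s) ?_
  have h1 := measure_add_measure_compl (μ := μ) hs
  have h2 := measure_add_measure_compl (μ := ν) hs
  have h3 := h sᶜ
  have h4 : ν s + ν sᶜ ≤ μ s + ν sᶜ := by
    rw [h2, ← hu, ← h1]; gcongr
  exact (ENNReal.add_le_add_iff_right (measure_ne_top _ _)).1 h4

lemma uwAux_symm_le (hd : ∀ x y, d x y = d y x) (μ ν : SubProb X)
    (h : ν.1 univ = μ.1 univ) :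
    {r : ℝ | ∃ γ : Measure (X × X), γ Set.univ ≤ 1 ∧
      γ.map Prod.fst ≤ μ.1 ∧ γ.map Prod.snd = ν.1 ∧ r = ∫ p, d p.1 p.2 ∂γ} ⊆
    {r : ℝ | ∃ γ : Measure (X × X), γ Set.univ ≤ 1 ∧
      γ.map Prod.fst ≤ ν.1 ∧ γ.map Prod.snd = μ.1 ∧ r = ∫ p, d p.1 p.2 ∂γ} := by
  rintro _ ⟨γ, hγ, hf, hs, rfl⟩
  have h4 : γ univ = ν.1 univ := by
    rw [← hs, Measure.map_apply measurable_snd MeasurableSet.univ]; simp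
  have h5 : γ.map Prod.fst = μ.1 := by
    refine uw_eq_of_le hf ?_
    rw [Measure.map_apply measurable_fst MeasurableSet.univ, ← h, ← h4]; simp
  refine ⟨γ.map Prod.swap, ?_, ?_, ?_, ?_⟩
  · rw [Measure.map_apply measurable_swap MeasurableSet.univ]; simpa using hγ
  · rw [Measure.map_map measurable_fst measurable_swap]; exact le_of_eq hs
  · rw [Measure.map_map measurable_snd measurable_swap]; exact h5
  · have := (MeasurableEquiv.prodComm (α := X) (β := X)).measurableEmbedding.integral_map
      (μ := γ) (fun p => d p.1 p.2)
    rw [show γ.map Prod.swap = γ.map (MeasurableEquiv.prodComm (α := X) (β := X)) from rfl, this]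
    exact integral_congr_ae (ae_of_all _ fun p => hd _ _)

lemma uwAux_symm (hd : ∀ x y, d x y = d y x) (μ ν : SubProb X)
    (h : ν.1 univ = μ.1 univ) : uwAux d μ.1 ν.1 = uwAux d ν.1 μ.1 := by
  unfold uwAux
  rw [h, subset_antisymm (uwAux_symm_le hd μ ν h) (uwAux_symm_le hd ν μ h.symm)]

lemma uwDist_symm (hd : ∀ x y, d x y = d y x) (μ ν : SubProb X) :
    uwDist d μ.1 ν.1 = uwDist d ν.1 μ.1 := by
  unfold uwDist
  rcases lt_trichotomy (ν.1 univ) (μ.1 univ) with h | h | h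
  · rw [if_pos h.le, if_neg (not_le.2 h)]
  · rw [if_pos h.le, if_pos h.ge, uwAux_symm hd μ ν h]
  · rw [if_neg (not_le.2 h), if_pos h.le]

lemma uwDist_nonneg (h0 : ∀ x y, 0 ≤ d x y) (μ ν : SubProb X) : 0 ≤ uwDist d μ.1 ν.1 := by
  unfold uwDist
  split_ifs with h
  · exact uwAux_nonneg h0 μ ν h
  · exact uwAux_nonneg h0 ν μ (not_le.1 h).le

lemma uwDist_le_one (h0 : ∀ x y, 0 ≤ d x y) (h1 : ∀ x y, d x y ≤ 1) (μ ν : SubProb X) :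
    uwDist d μ.1 ν.1 ≤ 1 := by
  unfold uwDist
  split_ifs with h
  · exact uwAux_le_one h0 h1 μ ν h
  · exact uwAux_le_one h0 h1 ν μ (not_le.1 h).le

end uw

section uwtop

variable {X : Type} [TopologicalSpace X] [MeasurableSpace X] [BorelSpace X]
  [CompactSpace X] [T2Space X] [SecondCountableTopology X] {d : X → X → ℝ}

lemma uwAux_closed (h0 : ∀ x y, 0 ≤ d x y) (h1 : ∀ x y, d x y ≤ 1)
    (hl : LowerSemicontinuous (fun p : X × X => d p.1 p.2)) (c : ℝ) :
    IsClosed {p : SubProb X × SubProb X | p.2.1 univ ≤ p.1.1 univ ∧ uwAux d p.1.1 p.2.1 ≤ c} := by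
  haveI := sp_compact (X := X)
  haveI := sp_compact (X := X × X)
  let K : ℝ → Set ((SubProb X × SubProb X) × (SubProb (X × X) × SubProb X)) := fun c =>
    (⋂ f : C(X, ℝ), {z | ∫ p, f p.1 ∂z.2.1.1 + ∫ x, f x ∂z.2.2.1 = ∫ x, f x ∂z.1.1.1}) ∩
    (⋂ f : C(X, ℝ), {z | ∫ p, f p.2 ∂z.2.1.1 = ∫ x, f x ∂z.1.2.1}) ∩
    {z | (z.1.1.1 univ).toReal - (z.1.2.1 univ).toReal + ∫ p, d p.1 p.2 ∂z.2.1.1 ≤ c}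
  have hK : ∀ c, IsClosed (K c) := by
    intro c
    refine IsClosed.inter (IsClosed.inter ?_ ?_) ?_
    · refine isClosed_iInter fun f => isClosed_eq (Continuous.add ?_ ?_) ?_
      · exact (sp_cont_integral' (X := X × X) (f := fun p => f p.1) (by fun_prop)).comp
          (continuous_fst.comp continuous_snd)
      · exact (sp_cont_integral' f.continuous).comp (continuous_snd.comp continuous_snd)
      · exact (sp_cont_integral' f.continuous).comp (continuous_fst.comp continuous_fst)
    · refine isClosed_iInter fun f => isClosed_eq ?_ ?_
      · exact (sp_cont_integral' (X := X × X) (f := fun p => f p.2) (by fun_prop)).comp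
          (continuous_fst.comp continuous_snd)
      · exact (sp_cont_integral' f.continuous).comp (continuous_snd.comp continuous_fst)
    · have hd := (lsc_integral hl (fun p => h0 _ _) (fun p => h1 _ _)).comp
        (continuous_fst.comp continuous_snd :
          Continuous fun z : (SubProb X × SubProb X) × (SubProb (X × X) × SubProb X) => z.2.1)
      have hm : Continuous fun z : (SubProb X × SubProb X) × (SubProb (X × X) × SubProb X) =>
          (z.1.1.1 univ).toReal - (z.1.2.1 univ).toReal :=
        (sp_cont_mass.comp (continuous_fst.comp continuous_fst)).sub
          (sp_cont_mass.comp (continuous_snd.comp continuous_fst))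
      exact lowerSemicontinuous_iff_isClosed_preimage.1 (hm.lowerSemicontinuous.add hd) c
  have hmem : ∀ c α β, (α, β) ∈ Prod.fst '' K c ↔ ∃ γ : Measure (X × X), γ univ ≤ 1 ∧
      γ.map Prod.fst ≤ α.1 ∧ γ.map Prod.snd = β.1 ∧
      (α.1 univ).toReal - (β.1 univ).toReal + ∫ p, d p.1 p.2 ∂γ ≤ c := by
    intro c α β
    constructor
    · rintro ⟨⟨⟨α', β'⟩, γ, ρ⟩, ⟨⟨hz1, hz2⟩, hz3⟩, heq⟩
      simp only [Prod.mk.injEq] at heq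
      obtain ⟨rfl, rfl⟩ := heq
      simp only [mem_iInter] at hz1 hz2
      have e1 : γ.1.map Prod.fst + ρ.1 = α'.1 := by
        refine sp_ext fun f => ?_
        rw [integral_add_measure, integral_map measurable_fst.aemeasurable
          f.continuous.aestronglyMeasurable]
        · exact hz1 f
        · exact (BoundedContinuousFunction.mkOfCompact f).integrable _
        · exact (BoundedContinuousFunction.mkOfCompact f).integrable _
      have e2 : γ.1.map Prod.snd = β'.1 := by
        refine sp_ext fun f => ?_
        rw [integral_map measurable_snd.aemeasurable f.continuous.aestronglyMeasurable]
        exact hz2 f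
      refine ⟨γ.1, γ.2, ?_, e2, hz3⟩
      rw [← e1]; exact Measure.le_add_right le_rfl
    · rintro ⟨γ, hγ, hf, hs, hc⟩
      haveI : IsFiniteMeasure γ := ⟨lt_of_le_of_lt hγ (by simp)⟩
      have e1 : γ.map Prod.fst + (α.1 - γ.map Prod.fst) = α.1 := by
        rw [add_comm]; exact Measure.sub_add_cancel_of_le hf
      refine ⟨⟨⟨α, β⟩, ⟨γ, hγ⟩, ⟨α.1 - γ.map Prod.fst, (Measure.sub_le univ).trans α.2⟩⟩,
        ⟨⟨mem_iInter.2 fun f => ?_, mem_iInter.2 fun f => ?_⟩, hc⟩, rfl⟩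
      · change ∫ p, f p.1 ∂γ + ∫ x, f x ∂(α.1 - γ.map Prod.fst) = ∫ x, f x ∂α.1
        conv_rhs => rw [← e1]
        rw [integral_add_measure, integral_map measurable_fst.aemeasurable
          f.continuous.aestronglyMeasurable]
        · exact (BoundedContinuousFunction.mkOfCompact f).integrable _
        · exact (BoundedContinuousFunction.mkOfCompact f).integrable _
      · change ∫ p, f p.2 ∂γ = ∫ x, f x ∂β.1
        rw [← hs, integral_map measurable_snd.aemeasurable f.continuous.aestronglyMeasurable]
  have : {p : SubProb X × SubProb X | p.2.1 univ ≤ p.1.1 univ ∧ uwAux d p.1.1 p.2.1 ≤ c} =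
      ⋂ ε : {ε : ℝ // 0 < ε}, Prod.fst '' K (c + ε.1) := by
    ext ⟨α, β⟩
    rw [mem_iInter]
    simp only [hmem]
    constructor
    · rintro ⟨hle, hc⟩ ⟨ε, hε⟩
      simp only at hc hle
      have hne : {r : ℝ | ∃ γ : Measure (X × X), γ Set.univ ≤ 1 ∧
          γ.map Prod.fst ≤ α.1 ∧ γ.map Prod.snd = β.1 ∧ r = ∫ p, d p.1 p.2 ∂γ}.Nonempty := by
        obtain ⟨γ, a, b, c⟩ := uw_coupling α β hle
        exact ⟨_, γ, a, b, c, rfl⟩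
      obtain ⟨_, ⟨γ, a, b, e, rfl⟩, hlt⟩ := Real.lt_sInf_add_pos hne hε
      refine ⟨γ, a, b, e, ?_⟩
      unfold uwAux at hc
      simp only
      linarith
    · intro H
      constructor
      · obtain ⟨γ, -, a, b, -⟩ := H ⟨1, one_pos⟩
        have := a univ
        rw [Measure.map_apply measurable_fst MeasurableSet.univ] at this
        simp only
        rw [← b, Measure.map_apply measurable_snd MeasurableSet.univ]
        exact this
      · refine le_of_forall_pos_le_add fun ε hε => ?_
        obtain ⟨γ, a, b, e, hc⟩ := H ⟨ε, hε⟩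
        have := csInf_le (uw_bddBelow h0 α.1 β.1) ⟨γ, a, b, e, rfl⟩
        unfold uwAux
        simp only at hc ⊢
        linarith
  rw [this]
  exact isClosed_iInter fun ε => isClosedMap_fst_of_compactSpace _ (hK _)

lemma uwDist_lsc (h0 : ∀ x y, 0 ≤ d x y) (h1 : ∀ x y, d x y ≤ 1) (hd : ∀ x y, d x y = d y x)
    (hl : LowerSemicontinuous (fun p : X × X => d p.1 p.2)) :
    LowerSemicontinuous (fun p : SubProb X × SubProb X => uwDist d p.1.1 p.2.1) := by
  rw [lowerSemicontinuous_iff_isClosed_preimage]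
  intro c
  have hA := uwAux_closed h0 h1 hl c
  have hB := hA.preimage continuous_swap
  convert hA.union hB using 1
  ext ⟨α, β⟩
  simp only [mem_preimage, mem_Iic, mem_union, Prod.swap]
  change uwDist d α.1 β.1 ≤ c ↔ (β.1 univ ≤ α.1 univ ∧ uwAux d α.1 β.1 ≤ c) ∨
    (α.1 univ ≤ β.1 univ ∧ uwAux d β.1 α.1 ≤ c)
  unfold uwDist
  rcases lt_trichotomy (β.1 univ) (α.1 univ) with h | h | h
  · rw [if_pos h.le]; simp [h.le, not_le.2 h]
  · rw [if_pos h.le]; simp [h.le, h.ge, uwAux_symm hd α β h]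
  · rw [if_neg (not_le.2 h)]; simp [h.le, not_le.2 h]

end uwtop

lemma M_top (h : ℕ) :
    CompactSpace (M h) ∧ T2Space (M h) ∧ SecondCountableTopology (M h) := by
  induction h with
  | zero =>
    exact ⟨(inferInstance : CompactSpace Unit), (inferInstance : T2Space Unit),
      (inferInstance : SecondCountableTopology Unit)⟩
  | succ h ih =>
    obtain ⟨a, b, c⟩ := ih
    exact ⟨sp_compact (X := M h), sp_t2 (X := M h), sp_sc (X := M h)⟩

instance (h : ℕ) : CompactSpace (M h) := (M_top h).1
instance (h : ℕ) : T2Space (M h) := (M_top h).2.1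
instance (h : ℕ) : SecondCountableTopology (M h) := (M_top h).2.2

lemma Wdist_facts (h : ℕ) : (∀ x y, 0 ≤ Wdist h x y) ∧ (∀ x y, Wdist h x y ≤ 1) ∧
    (∀ x y, Wdist h x y = Wdist h y x) ∧
    LowerSemicontinuous (fun p : M h × M h => Wdist h p.1 p.2) := by
  induction h with
  | zero =>
    refine ⟨fun _ _ => le_rfl, fun _ _ => zero_le_one, fun _ _ => rfl, ?_⟩
    exact lowerSemicontinuous_const (z := (0 : ℝ))
  | succ h ih =>
    obtain ⟨a, b, c, d⟩ := ih
    exact ⟨fun x y => uwDist_nonneg a (toSub x) (toSub y),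
      fun x y => uwDist_le_one a b (toSub x) (toSub y),
      fun x y => uwDist_symm c (toSub x) (toSub y),
      uwDist_lsc (X := M h) (d := Wdist h) a b c d⟩

lemma toMeas_le {h : ℕ} (α : M (h+1)) : toMeas α univ ≤ 1 := (toSub α).2

instance {h : ℕ} (α : M (h+1)) : IsFiniteMeasure (toMeas α) := subProbFin (toSub α)

lemma hom_facts (h : ℕ) (T : TreeH h) : Continuous (homDen h T) ∧
    (∀ α, 0 ≤ homDen h T α) ∧ (∀ α, homDen h T α ≤ 1) := by
  induction h with
  | zero => exact ⟨continuous_const (y := (1 : ℝ)), fun _ => zero_le_one, fun _ => le_rfl⟩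
  | succ h ih =>
    have key : ∀ cs : List (TreeH h),
        Continuous (fun α : M (h+1) => (cs.map fun T => ∫ β, homDen h T β ∂(toMeas α)).prod) ∧
        (∀ α : M (h+1), 0 ≤ (cs.map fun T => ∫ β, homDen h T β ∂(toMeas α)).prod) ∧
        (∀ α : M (h+1), (cs.map fun T => ∫ β, homDen h T β ∂(toMeas α)).prod ≤ 1) := by
      intro cs
      induction cs with
      | nil => simp [continuous_const]
      | cons T cs ihc =>
        obtain ⟨c1, c2, c3⟩ := ihc
        obtain ⟨d1, d2, d3⟩ := ih T
        have e1 : Continuous (fun α : M (h+1) => ∫ β, homDen h T β ∂(toMeas α)) :=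
          sp_cont_integral' (X := M h) d1
        have e2 : ∀ α : M (h+1), 0 ≤ ∫ β, homDen h T β ∂(toMeas α) :=
          fun α => integral_nonneg d2
        have e3 : ∀ α : M (h+1), ∫ β, homDen h T β ∂(toMeas α) ≤ 1 := by
          intro α
          have h5 : ‖∫ β, homDen h T β ∂(toMeas α)‖ ≤ 1 * (toMeas α).real univ :=
            norm_integral_le_of_norm_le_const (ae_of_all _ fun p => by
              rw [Real.norm_of_nonneg (d2 _)]; exact d3 _)
          have h7 : (toMeas α).real univ ≤ 1 :=
            ENNReal.toReal_mono (b := 1) (by simp) (toMeas_le α)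
          have := (le_abs_self _).trans h5
          linarith
        simp only [List.map_cons, List.prod_cons]
        exact ⟨e1.mul c1, fun α => mul_nonneg (e2 α) (c2 α),
          fun α => mul_le_one₀ (e3 α) (c2 α) (c3 α)⟩
    exact key T

section core
variable {X : Type} [TopologicalSpace X] [MeasurableSpace X] [BorelSpace X]
  [CompactSpace X] [T2Space X] [SecondCountableTopology X] {d : X → X → ℝ}

lemma coupling_bound (h0 : ∀ x y, 0 ≤ d x y) (h1 : ∀ x y, d x y ≤ 1)
    (hl : LowerSemicontinuous (fun p : X × X => d p.1 p.2)) {f : X → ℝ} (hf : Continuous f)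
    {C : ℝ} (hC : ∀ x y, |f x - f y| ≤ C * d x y)
    (γ : Measure (X × X)) [IsFiniteMeasure γ] :
    |∫ x, f x ∂(γ.map Prod.fst) - ∫ x, f x ∂(γ.map Prod.snd)| ≤ C * ∫ p, d p.1 p.2 ∂γ := by
  have hi : Integrable (fun p : X × X => d p.1 p.2) γ :=
    Integrable.of_bound hl.measurable.aestronglyMeasurable 1
        (ae_of_all _ fun x => by rw [Real.norm_of_nonneg (h0 _ _)]; exact h1 _ _)
  have i1 : Integrable (fun p : X × X => f p.1) γ :=
    (BoundedContinuousFunction.mkOfCompact ⟨fun p : X × X => f p.1, by fun_prop⟩).integrable _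
  have i2 : Integrable (fun p : X × X => f p.2) γ :=
    (BoundedContinuousFunction.mkOfCompact ⟨fun p : X × X => f p.2, by fun_prop⟩).integrable _
  rw [integral_map measurable_fst.aemeasurable hf.aestronglyMeasurable,
    integral_map measurable_snd.aemeasurable hf.aestronglyMeasurable, ← integral_sub i1 i2,
    ← integral_const_mul]
  refine (abs_integral_le_integral_abs).trans ?_
  exact integral_mono (i1.sub i2).abs (hi.const_mul C) fun p => hC _ _

lemma uwAux_bound (h0 : ∀ x y, 0 ≤ d x y) (h1 : ∀ x y, d x y ≤ 1)
    (hl : LowerSemicontinuous (fun p : X × X => d p.1 p.2)) {f : X → ℝ} (hf : Continuous f)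
    (f0 : ∀ x, 0 ≤ f x) (f1 : ∀ x, f x ≤ 1)
    {C : ℝ} (C0 : 0 ≤ C) (hC : ∀ x y, |f x - f y| ≤ C * d x y)
    (μ ν : SubProb X) (h : ν.1 univ ≤ μ.1 univ) :
    |∫ x, f x ∂μ.1 - ∫ x, f x ∂ν.1| ≤ (1 + C) * uwAux d μ.1 ν.1 := by
  have hpos : (0:ℝ) < 1 + C := by linarith
  have hne : {r : ℝ | ∃ γ : Measure (X × X), γ Set.univ ≤ 1 ∧
      γ.map Prod.fst ≤ μ.1 ∧ γ.map Prod.snd = ν.1 ∧ r = ∫ p, d p.1 p.2 ∂γ}.Nonempty := by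
    obtain ⟨γ, a, b, c⟩ := uw_coupling μ ν h
    exact ⟨_, γ, a, b, c, rfl⟩
  suffices hs : |∫ x, f x ∂μ.1 - ∫ x, f x ∂ν.1| / (1 + C) -
      ((μ.1 univ).toReal - (ν.1 univ).toReal) ≤ sInf {r : ℝ | ∃ γ : Measure (X × X),
      γ Set.univ ≤ 1 ∧
      γ.map Prod.fst ≤ μ.1 ∧ γ.map Prod.snd = ν.1 ∧ r = ∫ p, d p.1 p.2 ∂γ} by
    unfold uwAux
    rw [← div_le_iff₀' hpos]
    linarith
  refine le_csInf hne ?_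
  rintro _ ⟨γ, hγ, hfst, hsnd, rfl⟩
  haveI : IsFiniteMeasure γ := ⟨lt_of_le_of_lt hγ (by simp)⟩
  have key := coupling_bound h0 h1 hl hf hC γ
  rw [hsnd] at key
  set ρ := μ.1 - γ.map Prod.fst with hρ
  haveI : IsFiniteMeasure ρ := ⟨lt_of_le_of_lt (Measure.sub_le univ) (measure_lt_top μ.1 _)⟩
  have e1 : γ.map Prod.fst + ρ = μ.1 := by
    rw [add_comm]; exact Measure.sub_add_cancel_of_le hfst
  have hif : ∀ κ : Measure X, IsFiniteMeasure κ → Integrable f κ := fun κ _ =>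
    (BoundedContinuousFunction.mkOfCompact ⟨f, hf⟩).integrable κ
  have e2 : ∫ x, f x ∂μ.1 = ∫ x, f x ∂(γ.map Prod.fst) + ∫ x, f x ∂ρ := by
    conv_lhs => rw [← e1]
    exact integral_add_measure (hif _ inferInstance) (hif _ inferInstance)
  have e3 : (μ.1 univ).toReal = (ν.1 univ).toReal + ρ.real univ := by
    conv_lhs => rw [← e1]
    rw [← hsnd, Measure.add_apply, ENNReal.toReal_add (measure_ne_top _ _) (measure_ne_top _ _),
      Measure.map_apply measurable_fst MeasurableSet.univ,
      Measure.map_apply measurable_snd MeasurableSet.univ]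
    rfl
  have e4 : 0 ≤ ∫ x, f x ∂ρ := integral_nonneg f0
  have e5 : ∫ x, f x ∂ρ ≤ ρ.real univ := by
    have h5 : ‖∫ x, f x ∂ρ‖ ≤ 1 * ρ.real univ :=
      norm_integral_le_of_norm_le_const (ae_of_all _ fun p => by
        rw [Real.norm_of_nonneg (f0 _)]; exact f1 _)
    have := (le_abs_self _).trans h5
    linarith
  have e6 : 0 ≤ ∫ p, d p.1 p.2 ∂γ := integral_nonneg fun p => h0 _ _
  rw [sub_le_iff_le_add, div_le_iff₀ hpos, e2, e3]
  have e7 : 0 ≤ ρ.real univ := measureReal_nonneg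
  rw [abs_le] at key ⊢
  have e8 := mul_nonneg C0 e7
  constructor <;> nlinarith [key.1, key.2]

end core

lemma nE_le_nV (h : ℕ) (T : TreeH h) : nE h T ≤ nV h T := by
  suffices H : nV h T = nE h T + 1 by omega
  induction h with
  | zero => rfl
  | succ h ih =>
    have key : ∀ cs : List (TreeH h),
        1 + (cs.map (nV h)).sum = cs.length + (cs.map (nE h)).sum + 1 := by
      intro cs
      induction cs with
      | nil => simp
      | cons T cs ihc =>
        have := ih T
        simp only [List.map_cons, List.sum_cons, List.length_cons]
        omega
    exact key T

lemma hom_lip (h : ℕ) (T : TreeH h) (α β : M h) :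
    |homDen h T α - homDen h T β| ≤ (nE h T : ℝ) * Wdist h α β := by
  induction h with
  | zero =>
    change |(1:ℝ) - 1| ≤ ((0:ℕ) : ℝ) * 0
    simp
  | succ h ih =>
    obtain ⟨w0, w1, w2, w3⟩ := Wdist_facts h
    have one : ∀ S : TreeH h, |∫ x, homDen h S x ∂(toMeas α) - ∫ x, homDen h S x ∂(toMeas β)| ≤
        (1 + (nE h S : ℝ)) * Wdist (h+1) α β := by
      intro S
      obtain ⟨s0, s1, s2⟩ := hom_facts h S
      change _ ≤ _ * uwDist (Wdist h) (toMeas α) (toMeas β)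
      unfold uwDist
      split_ifs with hle
      · exact uwAux_bound w0 w1 w3 s0 s1 s2 (Nat.cast_nonneg _) (fun x y => ih S x y)
          (toSub α) (toSub β) hle
      · rw [abs_sub_comm]
        exact uwAux_bound w0 w1 w3 s0 s1 s2 (Nat.cast_nonneg _) (fun x y => ih S x y)
          (toSub β) (toSub α) (not_le.1 hle).le
    have key : ∀ cs : List (TreeH h),
        |homDen (h+1) cs α - homDen (h+1) cs β| ≤ (nE (h+1) cs : ℝ) * Wdist (h+1) α β := by
      intro cs
      induction cs with
      | nil =>
        change |(1:ℝ) - 1| ≤ ((0:ℕ) : ℝ) * _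
        simp
      | cons S cs ihc =>
        have a := one S
        obtain ⟨-, p0, p1⟩ := hom_facts (h+1) cs
        obtain ⟨-, q0, q1⟩ := hom_facts (h+1) [S]
        have eq1 : ∀ α, homDen (h+1) [S] α = ∫ x, homDen h S x ∂(toMeas α) := by
          intro α; simp [homDen]
        have eq2 : ∀ α, homDen (h+1) (S :: cs) α =
            (∫ x, homDen h S x ∂(toMeas α)) * homDen (h+1) cs α := by
          intro α; simp [homDen]
        have eq3 : (nE (h+1) (S :: cs) : ℝ) = (1 + (nE h S : ℝ)) + nE (h+1) cs := by
          simp [nE]; ring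
        rw [← eq1, ← eq1] at a
        rw [eq2, eq2, eq3, ← eq1, ← eq1]
        set A := homDen (h+1) [S] α
        set B := homDen (h+1) [S] β
        have tri : |A * homDen (h+1) cs α - B * homDen (h+1) cs β| ≤
            |A - B| + |homDen (h+1) cs α - homDen (h+1) cs β| := by
          have : A * homDen (h+1) cs α - B * homDen (h+1) cs β =
            (A - B) * homDen (h+1) cs α + B * (homDen (h+1) cs α - homDen (h+1) cs β) := by ring
          rw [this]
          refine (abs_add_le _ _).trans ?_
          rw [abs_mul, abs_mul, abs_of_nonneg (p0 α), abs_of_nonneg (q0 β : 0 ≤ B)]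
          exact add_le_add (mul_le_of_le_one_right (abs_nonneg _) (p1 α))
            (mul_le_of_le_one_left (abs_nonneg _) (q1 β))
        linarith
    exact key T

/-- The counting lemma for trees: tree homomorphism density functions are Lipschitz
w.r.t. the iterated unbalanced Wasserstein metrics, with constant `|E(T)|` on `M h`
and constant `|V(T)|` for the induced Wasserstein metric on `P(M h)`. -/
theorem tree_counting_lemma (h : ℕ) (T : TreeH h) :
    (∀ α β : M h,
      |homDen h T α - homDen h T β| ≤ (nE h T : ℝ) * Wdist h α β) ∧
    (∀ μ ν : ProbM (M h),
      |(∫ α, homDen h T α ∂μ.1) - ∫ α, homDen h T α ∂ν.1| ≤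
        (nV h T : ℝ) * wassersteinDist (Wdist h) μ.1 ν.1) := by
  refine ⟨hom_lip h T, fun μ ν => ?_⟩
  obtain ⟨w0, w1, w2, w3⟩ := Wdist_facts h
  haveI := μ.2
  haveI := ν.2
  have hpos : (0:ℝ) < nV h T := by
    have : 0 < nV h T := by
      cases h with
      | zero => exact Nat.one_pos
      | succ h => exact Nat.lt_of_lt_of_le Nat.one_pos (Nat.le_add_right 1 _)
    exact_mod_cast this
  rw [← div_le_iff₀' hpos]
  refine le_csInf ⟨_, μ.1.prod ν.1, ?_, ?_, rfl⟩ ?_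
  · rw [Measure.map_fst_prod]; simp
  · rw [Measure.map_snd_prod]; simp
  · rintro _ ⟨γ, hf, hs, rfl⟩
    haveI : IsFiniteMeasure γ := by
      refine ⟨?_⟩
      have : γ univ = μ.1 univ := by
        rw [← hf, Measure.map_apply measurable_fst MeasurableSet.univ]; simp
      rw [this]; exact measure_lt_top _ _
    have key := coupling_bound w0 w1 w3 (hom_facts h T).1 (hom_lip h T) γ
    rw [hf, hs] at key
    rw [div_le_iff₀' hpos]
    refine key.trans ?_
    have e6 : 0 ≤ ∫ p, Wdist h p.1 p.2 ∂γ := integral_nonneg fun p => w0 _ _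
    have := nE_le_nV h T
    gcongr

end
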